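/- arXiv:2307.09932 — 3 statements merged into one kernel-verified Lean document; each statement's English description precedes it below -/
import Mathlib

section
/- Let w₁, w₂, W₁, W₂ be smooth real-valued functions on ℝ³ (coordinates (t,x,y)) with ∂_xWᵢ = ∂_ywᵢ for i = 1,2, satisfying the potential KP-II equations 4∂_twᵢ + ∂_x³wᵢ + 3(∂_xwᵢ)² + 3∂_yWᵢ = 0 (i = 1,2) and the Bäcklund relation W₂ − W₁ = ∂_x(w₂ + w₁) + (1/2)(w₂ − w₁)². Then v := (w₂ − w₁)/2 and V := (W₂ − W₁)/2 satisfy ∂_xV = ∂_yv and the modified KP-II equation 4∂_tv + ∂_x³v + 3∂_yV − 6v²∂_xv + 6(∂_xv)V = 0. -/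
noncomputable def pt (f : ℝ → ℝ → ℝ → ℝ) : ℝ → ℝ → ℝ → ℝ :=
  fun t x y => deriv (fun s => f s x y) t

noncomputable def px (f : ℝ → ℝ → ℝ → ℝ) : ℝ → ℝ → ℝ → ℝ :=
  fun t x y => deriv (fun s => f t s y) x

noncomputable def py (f : ℝ → ℝ → ℝ → ℝ) : ℝ → ℝ → ℝ → ℝ :=
  fun t x y => deriv (fun s => f t x s) y

/-!
The potential KP-II equation is linear except for the term `3 (∂ₓw)²`. Hence half the difference of
the equations for `w₂` and `w₁` is linear in `v = (w₂ - w₁) / 2` and `V = (W₂ - W₁) / 2`, except for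
the term `(3 / 2) ((∂ₓw₂)² - (∂ₓw₁)²) = 3 ∂ₓv ∂ₓ(w₂ + w₁)`. The Bäcklund relation reads
`∂ₓ(w₂ + w₁) = 2 (V - v²)`, which turns this term into the nonlinearity `6 ∂ₓv (V - v²)` of the
modified KP-II equation.
-/

section PartialDerivatives

variable {f g : ℝ → ℝ → ℝ → ℝ} {t x y : ℝ} (c : ℝ)

theorem pt_sub_div_const (hf : DifferentiableAt ℝ (fun s => f s x y) t)
    (hg : DifferentiableAt ℝ (fun s => g s x y) t) :
    pt (fun t x y => (f t x y - g t x y) / c) t x y = (pt f t x y - pt g t x y) / c :=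
  ((hf.hasDerivAt.fun_sub hg.hasDerivAt).div_const c).deriv

theorem py_sub_div_const (hf : DifferentiableAt ℝ (fun s => f t x s) y)
    (hg : DifferentiableAt ℝ (fun s => g t x s) y) :
    py (fun t x y => (f t x y - g t x y) / c) t x y = (py f t x y - py g t x y) / c :=
  ((hf.hasDerivAt.fun_sub hg.hasDerivAt).div_const c).deriv

theorem px_add (hf : DifferentiableAt ℝ (fun s => f t s y) x)
    (hg : DifferentiableAt ℝ (fun s => g t s y) x) :
    px (fun t x y => f t x y + g t x y) t x y = px f t x y + px g t x y :=
  deriv_fun_add hf hg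

theorem px_iterate_eq_iteratedDeriv (n : ℕ) (f : ℝ → ℝ → ℝ → ℝ) (t x y : ℝ) :
    px^[n] f t x y = iteratedDeriv n (fun s => f t s y) x := by
  induction n generalizing x with
  | zero => rfl
  | succ n ih => simp only [Function.iterate_succ_apply', px, ih, iteratedDeriv_succ]

theorem px_iterate_sub_div_const {n : ℕ} (hf : ContDiffAt ℝ n (fun s => f t s y) x)
    (hg : ContDiffAt ℝ n (fun s => g t s y) x) :
    px^[n] (fun t x y => (f t x y - g t x y) / c) t x y
      = (px^[n] f t x y - px^[n] g t x y) / c := by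
  simp only [px_iterate_eq_iteratedDeriv, iteratedDeriv_div_const, iteratedDeriv_fun_sub hf hg]

end PartialDerivatives

/-- A function `u` together with a realization `U` of the nonlocal term `∂ₓ⁻¹∂_y u`, with the
regularity under which all derivatives occurring in the KP-type equations exist classically.
Regularity is imposed in each variable separately, and the derivative of `U` in `x` is encoded by
`HasDerivAt`, so that it really exists. -/
structure IsKPPair (u U : ℝ → ℝ → ℝ → ℝ) : Prop where
  differentiable_t : ∀ x y, Differentiable ℝ fun t => u t x y
  contDiff_x : ∀ t y, ContDiff ℝ 3 fun x => u t x y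
  differentiable_y : ∀ t x, Differentiable ℝ fun y => u t x y
  hasDerivAt_primitive_x : ∀ t x y, HasDerivAt (fun s => U t s y) (py u t x y) x
  differentiable_primitive_y : ∀ t x, Differentiable ℝ fun y => U t x y

/-- Classical solutions `w` of the potential KP-II equation, with `W` realizing `∂ₓ⁻¹∂_y w`. -/
structure IsPotentialKPIISolution (w W : ℝ → ℝ → ℝ → ℝ) : Prop extends IsKPPair w W where
  equation : ∀ t x y, 4 * pt w t x y + px (px (px w)) t x y
    + 3 * (px w t x y) ^ 2 + 3 * py W t x y = 0

/-- Classical solutions `v` of the modified KP-II equation, with `V` realizing `∂ₓ⁻¹∂_y v`. -/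
structure IsModifiedKPIISolution (v V : ℝ → ℝ → ℝ → ℝ) : Prop extends IsKPPair v V where
  equation : ∀ t x y, 4 * pt v t x y + px (px (px v)) t x y + 3 * py V t x y
    - 6 * (v t x y) ^ 2 * px v t x y + 6 * px v t x y * V t x y = 0

namespace IsKPPair

variable {u U u₁ U₁ u₂ U₂ : ℝ → ℝ → ℝ → ℝ}

theorem of_contDiff (hu : ContDiff ℝ 3 fun p : ℝ × ℝ × ℝ => u p.1 p.2.1 p.2.2)
    (hU : Differentiable ℝ fun p : ℝ × ℝ × ℝ => U p.1 p.2.1 p.2.2)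
    (hUx : ∀ t x y, px U t x y = py u t x y) : IsKPPair u U where
  differentiable_t x y := (hu.differentiable (by simp)).comp
    (by fun_prop : Differentiable ℝ fun t : ℝ => (t, x, y))
  contDiff_x t y := hu.comp (by fun_prop : ContDiff ℝ 3 fun x : ℝ => (t, x, y))
  differentiable_y t x := (hu.differentiable (by simp)).comp
    (by fun_prop : Differentiable ℝ fun y : ℝ => (t, x, y))
  hasDerivAt_primitive_x t x y := hUx t x y ▸
    (hU.comp (by fun_prop : Differentiable ℝ fun x : ℝ => (t, x, y)) x).hasDerivAt
  differentiable_primitive_y t x :=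
    hU.comp (by fun_prop : Differentiable ℝ fun y : ℝ => (t, x, y))

theorem differentiable_x (h : IsKPPair u U) (t y : ℝ) : Differentiable ℝ fun x => u t x y :=
  (h.contDiff_x t y).differentiable (by simp)

theorem px_eq_py (h : IsKPPair u U) (t x y : ℝ) : px U t x y = py u t x y :=
  (h.hasDerivAt_primitive_x t x y).deriv

theorem sub_div_const (h₂ : IsKPPair u₂ U₂) (h₁ : IsKPPair u₁ U₁) (c : ℝ) :
    IsKPPair (fun t x y => (u₂ t x y - u₁ t x y) / c)
      (fun t x y => (U₂ t x y - U₁ t x y) / c) where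
  differentiable_t x y := ((h₂.differentiable_t x y).fun_sub (h₁.differentiable_t x y)).div_const c
  contDiff_x t y := ((h₂.contDiff_x t y).sub (h₁.contDiff_x t y)).div_const c
  differentiable_y t x := ((h₂.differentiable_y t x).fun_sub (h₁.differentiable_y t x)).div_const c
  hasDerivAt_primitive_x t x y := by
    rw [py_sub_div_const c (h₂.differentiable_y t x y) (h₁.differentiable_y t x y)]
    exact ((h₂.hasDerivAt_primitive_x t x y).fun_sub (h₁.hasDerivAt_primitive_x t x y)).div_const c
  differentiable_primitive_y t x :=
    ((h₂.differentiable_primitive_y t x).fun_sub (h₁.differentiable_primitive_y t x)).div_const c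

end IsKPPair

theorem backlund_difference_solves_mKPII_general {w₁ w₂ W₁ W₂ : ℝ → ℝ → ℝ → ℝ}
    (h₁ : IsPotentialKPIISolution w₁ W₁) (h₂ : IsPotentialKPIISolution w₂ W₂)
    (hBT : ∀ t x y, W₂ t x y - W₁ t x y
      = px (fun t x y => w₂ t x y + w₁ t x y) t x y + (1 / 2) * (w₂ t x y - w₁ t x y) ^ 2) :
    IsModifiedKPIISolution (fun t x y => (w₂ t x y - w₁ t x y) / 2)
      (fun t x y => (W₂ t x y - W₁ t x y) / 2) := by
  refine ⟨h₂.sub_div_const h₁.toIsKPPair 2, fun t x y => ?_⟩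
  have hx₁ := (h₁.contDiff_x t y).contDiffAt (x := x)
  have hx₂ := (h₂.contDiff_x t y).contDiffAt (x := x)
  have pt_v := pt_sub_div_const 2 (h₂.differentiable_t x y t) (h₁.differentiable_t x y t)
  have px_v := px_iterate_sub_div_const 2 (n := 1) (hx₂.of_le (by norm_num))
    (hx₁.of_le (by norm_num))
  have pxxx_v := px_iterate_sub_div_const 2 (n := 3) hx₂ hx₁
  have py_V := py_sub_div_const 2 (h₂.differentiable_primitive_y t x y)
    (h₁.differentiable_primitive_y t x y)
  have px_sum := px_add (h₂.differentiable_x t y x) (h₁.differentiable_x t y x)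
  simp only [Function.iterate_succ_apply, Function.iterate_zero_apply] at px_v pxxx_v
  have sq_sub_sq_px : (px w₂ t x y) ^ 2 - (px w₁ t x y) ^ 2
      = 4 * ((px w₂ t x y - px w₁ t x y) / 2)
        * ((W₂ t x y - W₁ t x y) / 2 - ((w₂ t x y - w₁ t x y) / 2) ^ 2) := by
    linear_combination (px w₁ t x y - px w₂ t x y) * (hBT t x y + px_sum)
  rw [pt_v, px_v, pxxx_v, py_V]
  linear_combination (h₂.equation t x y - h₁.equation t x y) / 2 - 3 / 2 * sq_sub_sq_px

/-- the half-difference of two Bäcklund-related solutions of the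
potential KP-II equation solves the modified KP-II equation. -/
theorem backlund_difference_solves_mKPII
    (w₁ w₂ W₁ W₂ : ℝ → ℝ → ℝ → ℝ)
    (hw₁ : ContDiff ℝ (⊤ : ℕ∞) fun p : ℝ × ℝ × ℝ => w₁ p.1 p.2.1 p.2.2)
    (hw₂ : ContDiff ℝ (⊤ : ℕ∞) fun p : ℝ × ℝ × ℝ => w₂ p.1 p.2.1 p.2.2)
    (hW₁ : ContDiff ℝ (⊤ : ℕ∞) fun p : ℝ × ℝ × ℝ => W₁ p.1 p.2.1 p.2.2)
    (hW₂ : ContDiff ℝ (⊤ : ℕ∞) fun p : ℝ × ℝ × ℝ => W₂ p.1 p.2.1 p.2.2)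
    (hW₁x : ∀ t x y, px W₁ t x y = py w₁ t x y)
    (hW₂x : ∀ t x y, px W₂ t x y = py w₂ t x y)
    (hpKP₁ : ∀ t x y, 4 * pt w₁ t x y + px (px (px w₁)) t x y
        + 3 * (px w₁ t x y)^2 + 3 * py W₁ t x y = 0)
    (hpKP₂ : ∀ t x y, 4 * pt w₂ t x y + px (px (px w₂)) t x y
        + 3 * (px w₂ t x y)^2 + 3 * py W₂ t x y = 0)
    (hBT : ∀ t x y, W₂ t x y - W₁ t x y
        = px (fun a b c => w₂ a b c + w₁ a b c) t x y
          + (1/2) * (w₂ t x y - w₁ t x y)^2) :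
    (∀ t x y, px (fun a b c => (W₂ a b c - W₁ a b c)/2) t x y
        = py (fun a b c => (w₂ a b c - w₁ a b c)/2) t x y)
    ∧ (∀ t x y,
        4 * pt (fun a b c => (w₂ a b c - w₁ a b c)/2) t x y
          + px (px (px fun a b c => (w₂ a b c - w₁ a b c)/2)) t x y
          + 3 * py (fun a b c => (W₂ a b c - W₁ a b c)/2) t x y
          - 6 * ((w₂ t x y - w₁ t x y)/2)^2
              * px (fun a b c => (w₂ a b c - w₁ a b c)/2) t x y
          + 6 * px (fun a b c => (w₂ a b c - w₁ a b c)/2) t x y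
              * ((W₂ t x y - W₁ t x y)/2) = 0) := by
  have h := backlund_difference_solves_mKPII_general
    ⟨.of_contDiff (contDiff_infty.mp hw₁ 3) (hW₁.differentiable (by simp)) hW₁x, hpKP₁⟩
    ⟨.of_contDiff (contDiff_infty.mp hw₂ 3) (hW₂.differentiable (by simp)) hW₂x, hpKP₂⟩ hBT
  exact ⟨h.px_eq_py, h.equation⟩
end

section
/- Let v, V be smooth real-valued functions on ℝ³ (coordinates (t,x,y)) with ∂_xV = ∂_yv, and suppose v satisfies the modified KP-II equation 4∂_tv + ∂_x³v + 3∂_yV − 6v²∂_xv + 6(∂_xv)V = 0. Then, for either choice of sign, the function u := ±∂_xv + V − v² satisfies the KP-II equation ∂_x(4∂_tu + ∂_x³u + 3∂_x(u²)) + 3∂_y²u = 0. -/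
/-!
Write `KP(u)` and `mKP(v)` for the left-hand sides of the two equations, where
`u = ε ∂ₓv + V - v²` with `ε = ±1` and `∂ₓV = ∂_yv`. Then `KP(u)` is a linear differential operator
applied to `mKP(v)`: `KP(u) = ε ∂ₓ²(mKP(v)) + ∂_y(mKP(v)) - 2 ∂ₓ(v · mKP(v))`.
This uses only the Leibniz rule and the commutation of `∂ₜ`, `∂ₓ`, `∂_y`, so it is an identity in
any commutative algebra with three commuting derivations; smooth functions on `ℝ³` are one such
algebra.
-/

open scoped ContDiff Manifold

theorem derivation_ofNat {R A M : Type*} [CommSemiring R] [CommSemiring A] [AddCommMonoid M]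
    [Algebra R A] [Module A M] [Module R M] (D : Derivation R A M) (n : ℕ) [n.AtLeastTwo] :
    D (ofNat(n) : A) = 0 :=
  D.map_natCast n

section DifferentialAlgebra

variable {R A : Type*} [CommRing R] [CommRing A] [Algebra R A]

/-- The left-hand side of the KP-II equation for `u`, in an algebra whose derivations `T`, `X`, `Y`
play the roles of `∂ₜ`, `∂ₓ`, `∂_y`. -/
def kpII (T X Y : Derivation R A A) (u : A) : A :=
  X (4 * T u + X (X (X u)) + 3 * X (u ^ 2)) + 3 * Y (Y u)

/-- The left-hand side of the modified KP-II equation for `v`, in an algebra whose derivations `T`,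
`X`, `Y` play the roles of `∂ₜ`, `∂ₓ`, `∂_y`. The nonlocal term `∂ₓ⁻¹∂_yv` is a separate
argument `V`, to be used with `X V = Y v`. -/
def mkpII (T X Y : Derivation R A A) (v V : A) : A :=
  4 * T v + X (X (X v)) + 3 * Y V - 6 * v ^ 2 * X v + 6 * X v * V

/-- The Miura transform `ε ∂ₓv + V - v²`, where `X` plays the role of `∂ₓ` and `V` stands for
`∂ₓ⁻¹∂_yv`; the signs `ε = ±1` give the two transformations `M_±`. -/
def miura (X : Derivation R A A) (ε : R) (v V : A) : A :=
  ε • X v + V - v ^ 2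

theorem kpII_miura (T X Y : Derivation R A A) (hXT : Function.Commute X T)
    (hXY : Function.Commute X Y) (hYT : Function.Commute Y T) {v V : A} (hV : X V = Y v)
    {ε : R} (hε : ε ^ 2 = 1) :
    kpII T X Y (miura X ε v V) =
      ε • X (X (mkpII T X Y v V)) + Y (mkpII T X Y v V) - 2 * X (v * mkpII T X Y v V) := by
  have hε' : algebraMap R A ε ^ 2 = 1 := by rw [← map_pow, hε, map_one]
  simp only [kpII, mkpII, miura, pow_two, map_add, map_sub, Algebra.smul_def (A := A) ε,
    Derivation.leibniz, Derivation.map_algebraMap, derivation_ofNat, smul_eq_mul, mul_zero,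
    add_zero, hXT.eq, hXY.eq, hYT.eq, hV]
  -- the two sides differ by `(ε² - 1) * 3 ∂ₓ²((∂ₓv)²)`
  linear_combination (6 * X (X v) ^ 2 + 6 * X v * X (X (X v))) * hε'

theorem kpII_miura_eq_zero (T X Y : Derivation R A A) (hXT : Function.Commute X T)
    (hXY : Function.Commute X Y) (hYT : Function.Commute Y T) {v V : A} (hV : X V = Y v)
    {ε : R} (hε : ε ^ 2 = 1) (hv : mkpII T X Y v V = 0) :
    kpII T X Y (miura X ε v V) = 0 := by
  simp only [kpII_miura T X Y hXT hXY hYT hV hε, hv, mul_zero, map_zero, smul_zero, add_zero,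
    sub_zero]

end DifferentialAlgebra

section DirectionalDerivative

variable {𝕜 E : Type*} [NontriviallyNormedField 𝕜] [NormedAddCommGroup E] [NormedSpace 𝕜 E]

theorem hasFDerivAt_smoothMap (f : C^∞⟮𝓘(𝕜, E), E; 𝕜⟯) (p : E) :
    HasFDerivAt f (fderiv 𝕜 f p) p :=
  (f.contMDiff.contDiff.differentiable (by simp) p).hasFDerivAt

theorem contDiff_fderiv_smoothMap (f : C^∞⟮𝓘(𝕜, E), E; 𝕜⟯) : ContDiff 𝕜 ∞ (fderiv 𝕜 f) :=
  f.contMDiff.contDiff.fderiv_right (by simp)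

/-- The derivative in the constant direction `w`, as a derivation of the algebra of smooth
functions. -/
noncomputable def dirDerivation (w : E) :
    Derivation 𝕜 C^∞⟮𝓘(𝕜, E), E; 𝕜⟯ C^∞⟮𝓘(𝕜, E), E; 𝕜⟯ :=
  Derivation.mk'
    { toFun f := ⟨fun p => fderiv 𝕜 f p w,
        ((contDiff_fderiv_smoothMap f).clm_apply contDiff_const).contMDiff⟩
      map_add' f g := by
        ext p
        exact DFunLike.congr_fun
          ((hasFDerivAt_smoothMap f p).add (hasFDerivAt_smoothMap g p)).fderiv w
      map_smul' c f := by
        ext p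
        exact DFunLike.congr_fun ((hasFDerivAt_smoothMap f p).const_smul c).fderiv w }
    fun f g => by
      ext p
      exact DFunLike.congr_fun
        ((hasFDerivAt_smoothMap f p).mul (hasFDerivAt_smoothMap g p)).fderiv w

theorem dirDerivation_apply (w : E) (f : C^∞⟮𝓘(𝕜, E), E; 𝕜⟯) (p : E) :
    dirDerivation w f p = fderiv 𝕜 f p w :=
  rfl

theorem dirDerivation_dirDerivation_apply (w w' : E) (f : C^∞⟮𝓘(𝕜, E), E; 𝕜⟯) (p : E) :
    dirDerivation w (dirDerivation w' f) p = fderiv 𝕜 (fderiv 𝕜 f) p w w' := by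
  have hf' : DifferentiableAt 𝕜 (fderiv 𝕜 f) p :=
    (contDiff_fderiv_smoothMap f).differentiable (by simp) p
  have h := (hf'.hasFDerivAt.clm_apply (hasFDerivAt_const w' p)).fderiv
  simpa [dirDerivation_apply] using! DFunLike.congr_fun h w

theorem dirDerivation_commute [IsRCLikeNormedField 𝕜] (w w' : E) :
    Function.Commute (dirDerivation (𝕜 := 𝕜) w) (dirDerivation w') := by
  intro f
  ext p
  have hsymm : IsSymmSndFDerivAt 𝕜 f p :=
    f.contMDiff.contDiff.contDiffAt.isSymmSndFDerivAt (by simpa using ENat.LEInfty.out)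
  rw [dirDerivation_dirDerivation_apply, dirDerivation_dirDerivation_apply, hsymm.eq]

theorem deriv_comp_eq_dirDerivation (f : C^∞⟮𝓘(𝕜, E), E; 𝕜⟯) {c : 𝕜 → E} {w : E} {s : 𝕜}
    (hc : HasDerivAt c w s) : deriv (fun r => f (c r)) s = dirDerivation w f (c s) :=
  ((hasFDerivAt_smoothMap f (c s)).comp_hasDerivAt s hc).deriv

end DirectionalDerivative

local notation "∂ₜ" => dirDerivation (𝕜 := ℝ) ((1, 0, 0) : ℝ × ℝ × ℝ)
local notation "∂ₓ" => dirDerivation (𝕜 := ℝ) ((0, 1, 0) : ℝ × ℝ × ℝ)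
local notation "∂_y" => dirDerivation (𝕜 := ℝ) ((0, 0, 1) : ℝ × ℝ × ℝ)

section ThreeVariables

/-- The algebra homomorphism presenting a smooth function on `ℝ³` as a function of three real
arguments `t`, `x`, `y`, the form on which `pt`, `px`, `py` act. -/
noncomputable def curried : C^∞⟮𝓘(ℝ, ℝ × ℝ × ℝ), ℝ × ℝ × ℝ; ℝ⟯ →ₐ[ℝ] ℝ → ℝ → ℝ → ℝ where
  toFun f t x y := f (t, x, y)
  map_one' := rfl
  map_mul' _ _ := rfl
  map_zero' := rfl
  map_add' _ _ := rfl
  commutes' _ := rfl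

theorem curried_injective : Function.Injective curried := fun f g h => by
  ext ⟨t, x, y⟩
  exact congr_fun₃ h t x y

theorem exists_curried_eq {f : ℝ → ℝ → ℝ → ℝ}
    (hf : ContDiff ℝ ∞ fun p : ℝ × ℝ × ℝ => f p.1 p.2.1 p.2.2) : ∃ g, curried g = f :=
  ⟨⟨_, hf.contMDiff⟩, rfl⟩

variable (u v V : C^∞⟮𝓘(ℝ, ℝ × ℝ × ℝ), ℝ × ℝ × ℝ; ℝ⟯)

theorem curried_dirDerivation_t : curried (∂ₜ u) = pt (curried u) := by
  funext t x y
  exact (deriv_comp_eq_dirDerivation u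
    ((hasDerivAt_id t).prodMk (hasDerivAt_const t (x, y)))).symm

theorem curried_dirDerivation_x : curried (∂ₓ u) = px (curried u) := by
  funext t x y
  exact (deriv_comp_eq_dirDerivation u
    ((hasDerivAt_const x t).prodMk ((hasDerivAt_id x).prodMk (hasDerivAt_const x y)))).symm

theorem curried_dirDerivation_y : curried (∂_y u) = py (curried u) := by
  funext t x y
  exact (deriv_comp_eq_dirDerivation u
    ((hasDerivAt_const y t).prodMk ((hasDerivAt_const y x).prodMk (hasDerivAt_id y)))).symm

theorem curried_kpII :
    curried (kpII ∂ₜ ∂ₓ ∂_y u) =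
      px (4 * pt (curried u) + px (px (px (curried u))) + 3 * px (curried u ^ 2)) +
        3 * py (py (curried u)) := by
  rw [kpII, map_add, curried_dirDerivation_x]
  simp only [map_add, map_mul, map_pow, map_ofNat, curried_dirDerivation_t,
    curried_dirDerivation_x, curried_dirDerivation_y]

theorem curried_mkpII :
    curried (mkpII ∂ₜ ∂ₓ ∂_y v V) =
      4 * pt (curried v) + px (px (px (curried v))) + 3 * py (curried V)
        - 6 * curried v ^ 2 * px (curried v) + 6 * px (curried v) * curried V := by
  simp only [mkpII, map_add, map_sub, map_mul, map_pow, map_ofNat, curried_dirDerivation_t,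
    curried_dirDerivation_x, curried_dirDerivation_y]

theorem curried_miura (ε : ℝ) :
    curried (miura ∂ₓ ε v V) = ε • px (curried v) + curried V - curried v ^ 2 := by
  simp only [miura, map_add, map_sub, map_smul, map_pow, curried_dirDerivation_x]

end ThreeVariables

/-- the Miura transformation maps solutions of the modified
KP-II equation to solutions of KP-II (for either choice of sign). -/
theorem miura_maps_mKPII_to_KPII
    (v V : ℝ → ℝ → ℝ → ℝ)
    (hv : ContDiff ℝ (⊤ : ℕ∞) fun p : ℝ × ℝ × ℝ => v p.1 p.2.1 p.2.2)
    (hV : ContDiff ℝ (⊤ : ℕ∞) fun p : ℝ × ℝ × ℝ => V p.1 p.2.1 p.2.2)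
    (hVx : ∀ t x y, px V t x y = py v t x y)
    (hmKP : ∀ t x y, 4 * pt v t x y + px (px (px v)) t x y + 3 * py V t x y
        - 6 * (v t x y)^2 * px v t x y + 6 * px v t x y * V t x y = 0)
    (ε : ℝ) (hε : ε = 1 ∨ ε = -1) :
    ∀ t x y,
      px (fun a b c =>
          4 * pt (fun d e f => ε * px v d e f + V d e f - (v d e f)^2) a b c
          + px (px (px fun d e f => ε * px v d e f + V d e f - (v d e f)^2)) a b c
          + 3 * px (fun d e f => (ε * px v d e f + V d e f - (v d e f)^2)^2) a b c) t x y
        + 3 * py (py fun d e f => ε * px v d e f + V d e f - (v d e f)^2) t x y = 0 := by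
  obtain ⟨v, rfl⟩ := exists_curried_eq hv
  obtain ⟨V, rfl⟩ := exists_curried_eq hV
  have hVx' : ∂ₓ V = ∂_y v := curried_injective <| by
    rw [curried_dirDerivation_x, curried_dirDerivation_y]
    exact funext₃ hVx
  have hmKP' : mkpII ∂ₜ ∂ₓ ∂_y v V = 0 := curried_injective <| by
    rw [curried_mkpII, map_zero]
    exact funext₃ hmKP
  have hKP : curried (kpII ∂ₜ ∂ₓ ∂_y (miura ∂ₓ ε v V)) = 0 := by
    rw [kpII_miura_eq_zero ∂ₜ ∂ₓ ∂_y (dirDerivation_commute _ _) (dirDerivation_commute _ _)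
      (dirDerivation_commute _ _) hVx' (sq_eq_one_iff.2 hε) hmKP', map_zero]
  rw [curried_kpII, curried_miura] at hKP
  exact congr_fun₃ hKP
end

section
/- Let τ₁, τ₂ : ℝ² → ℝ (coordinates (x,y)) be smooth and everywhere positive, satisfying the bilinear Bäcklund relation τ₁∂_x²τ₂ − 2(∂_xτ₁)(∂_xτ₂) + τ₂∂_x²τ₁ + τ₂∂_yτ₁ − τ₁∂_yτ₂ = 0. Set u₁ := 2∂_x² log τ₁, u₂ := 2∂_x² log τ₂, h := τ₂/τ₁ and v₂ := ∂_x log(τ₂/τ₁). Then for every smooth complex-valued function g on ℝ²: (a) ∂_x²g + ∂_yg − 2v₂∂_xg = h·(∂_y + ∂_x² + u₂)(h⁻¹g), and (b) −∂_x²g + ∂_yg − 2v₂∂_xg = −h⁻¹·(−∂_y + ∂_x² + u₁)(hg). -/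
noncomputable def pX {E : Type*} [NormedAddCommGroup E] [NormedSpace ℝ E]
    (f : ℝ → ℝ → E) : ℝ → ℝ → E :=
  fun x y => deriv (fun s => f s y) x

noncomputable def pY {E : Type*} [NormedAddCommGroup E] [NormedSpace ℝ E]
    (f : ℝ → ℝ → E) : ℝ → ℝ → E :=
  fun x y => deriv (fun s => f x s) y

/-!
On a product, `L = ε ∂_y + ∂_x² + u` acts by `L (r g) = (L r) g + 2 r_x g_x + r (ε ∂_y + ∂_x²) g`.
Hence if `L r = 0`, conjugating `L` by `r` removes the potential and leaves the drift
`2 (∂_x log r) ∂_x`. For `u = 2 ∂_x² log τ` and `r = σ / τ`, the quantity `τ² L r` is the Hirota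
bilinear form `(D_x² + ε D_y) σ · τ`. The Bäcklund relation therefore says both that `L₁ h = 0` and,
exchanging `τ₁` with `τ₂` and `ε` with `-ε`, that `L₂* h⁻¹ = 0`.
-/

section LaxOperator

variable {E : Type*} [NormedAddCommGroup E] [NormedSpace ℝ E]

/-- The differentiability needed to apply an operator `ε ∂_y + ∂_x² + u`: twice in the first
variable and once in the second, along coordinate lines only. -/
structure HeatDifferentiable (f : ℝ → ℝ → E) : Prop where
  differentiable_fst : ∀ y, Differentiable ℝ fun s => f s y
  differentiable_pX : ∀ y, Differentiable ℝ fun s => pX f s y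
  differentiable_snd : ∀ x, Differentiable ℝ fun s => f x s

/-- The Lax operator `ε ∂_y + ∂_x² + u`; `L₂*` and `L₁` are the cases `ε = 1` and `ε = -1`. -/
noncomputable def laxOp (ε : ℝ) (u : ℝ → ℝ → ℝ) (f : ℝ → ℝ → E) : ℝ → ℝ → E :=
  fun x y => ε • pY f x y + pX (pX f) x y + u x y • f x y

/-- The potential `2 ∂_x² log τ` attached to a tau function. -/
noncomputable def tauPotential (τ : ℝ → ℝ → ℝ) : ℝ → ℝ → ℝ :=
  fun x y => 2 * pX (pX fun a b => Real.log (τ a b)) x y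

/-- The Hirota bilinear form `(D_x² + ε D_y) σ · τ`; the Bäcklund relation of `τ₁` and `τ₂` is the
vanishing of its case `ε = 1`, `σ = τ₁`, `τ = τ₂`. -/
noncomputable def hirotaForm (ε : ℝ) (σ τ : ℝ → ℝ → ℝ) : ℝ → ℝ → ℝ :=
  fun x y => σ x y * pX (pX τ) x y - 2 * pX σ x y * pX τ x y + τ x y * pX (pX σ) x y
    + ε * (τ x y * pY σ x y - σ x y * pY τ x y)

theorem hirotaForm_neg_swap (ε : ℝ) (σ τ : ℝ → ℝ → ℝ) (x y : ℝ) :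
    hirotaForm (-ε) τ σ x y = hirotaForm ε σ τ x y := by
  simp only [hirotaForm]
  ring

theorem HeatDifferentiable.of_contDiff {f : ℝ → ℝ → E}
    (hf : ContDiff ℝ 2 fun p : ℝ × ℝ => f p.1 p.2) : HeatDifferentiable f := by
  have slice_fst (y : ℝ) : ContDiff ℝ 2 fun s => f s y :=
    hf.comp (contDiff_id.prodMk contDiff_const)
  have slice_snd (x : ℝ) : ContDiff ℝ 2 fun s => f x s :=
    hf.comp (contDiff_const.prodMk contDiff_id)
  exact ⟨fun y => (slice_fst y).differentiable two_ne_zero,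
    fun y => (slice_fst y).differentiable_deriv_two,
    fun x => (slice_snd x).differentiable two_ne_zero⟩

variable {r σ τ : ℝ → ℝ → ℝ} {g : ℝ → ℝ → E}

theorem pX_smul (hr : ∀ y, Differentiable ℝ fun s => r s y)
    (hg : ∀ y, Differentiable ℝ fun s => g s y) :
    pX (fun a b => r a b • g a b) = fun x y => r x y • pX g x y + pX r x y • g x y :=
  funext₂ fun x y => deriv_fun_smul (hr y x) (hg y x)

theorem pY_smul (hr : ∀ x, Differentiable ℝ fun s => r x s)
    (hg : ∀ x, Differentiable ℝ fun s => g x s) :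
    pY (fun a b => r a b • g a b) = fun x y => r x y • pY g x y + pY r x y • g x y :=
  funext₂ fun x y => deriv_fun_smul (hr x y) (hg x y)

theorem pX_pX_smul (hr : HeatDifferentiable r) (hg : HeatDifferentiable g) :
    pX (pX fun a b => r a b • g a b) = fun x y =>
      r x y • pX (pX g) x y + (2 * pX r x y) • pX g x y + pX (pX r) x y • g x y := by
  rw [pX_smul hr.differentiable_fst hg.differentiable_fst]
  funext x y
  have hr_x : HasDerivAt (fun s => r s y) (pX r x y) x :=
    (hr.differentiable_fst y x).hasDerivAt
  have hg_x : HasDerivAt (fun s => g s y) (pX g x y) x :=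
    (hg.differentiable_fst y x).hasDerivAt
  have hr_xx : HasDerivAt (fun s => pX r s y) (pX (pX r) x y) x :=
    (hr.differentiable_pX y x).hasDerivAt
  have hg_xx : HasDerivAt (fun s => pX g s y) (pX (pX g) x y) x :=
    (hg.differentiable_pX y x).hasDerivAt
  refine ((hr_x.smul hg_xx).add (hr_xx.smul hg_x)).deriv.trans ?_
  module

theorem pX_div (hσ : ∀ y, Differentiable ℝ fun s => σ s y)
    (hτ : ∀ y, Differentiable ℝ fun s => τ s y) (hτ₀ : ∀ x y, τ x y ≠ 0) :
    pX (fun a b => σ a b / τ a b) =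
      fun x y => (pX σ x y * τ x y - σ x y * pX τ x y) / τ x y ^ 2 :=
  funext₂ fun x y => deriv_fun_div (hσ y x) (hτ y x) (hτ₀ x y)

theorem pX_log (hτ : ∀ y, Differentiable ℝ fun s => τ s y) (hτ₀ : ∀ x y, τ x y ≠ 0) :
    pX (fun a b => Real.log (τ a b)) = fun x y => pX τ x y / τ x y :=
  funext₂ fun x y => deriv.log (hτ y x) (hτ₀ x y)

theorem tauPotential_eq (hτ : HeatDifferentiable τ) (hτ₀ : ∀ x y, τ x y ≠ 0) :
    tauPotential τ = fun x y =>
      2 * ((pX (pX τ) x y * τ x y - pX τ x y * pX τ x y) / τ x y ^ 2) := by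
  unfold tauPotential
  rw [pX_log hτ.differentiable_fst hτ₀, pX_div hτ.differentiable_pX hτ.differentiable_fst hτ₀]

theorem HeatDifferentiable.div (hσ : HeatDifferentiable σ) (hτ : HeatDifferentiable τ)
    (hτ₀ : ∀ x y, τ x y ≠ 0) : HeatDifferentiable fun a b => σ a b / τ a b where
  differentiable_fst y :=
    (hσ.differentiable_fst y).fun_div (hτ.differentiable_fst y) fun x => hτ₀ x y
  differentiable_pX y := by
    rw [pX_div hσ.differentiable_fst hτ.differentiable_fst hτ₀]
    exact (((hσ.differentiable_pX y).fun_mul (hτ.differentiable_fst y)).fun_sub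
      ((hσ.differentiable_fst y).fun_mul (hτ.differentiable_pX y))).fun_div
        ((hτ.differentiable_fst y).fun_pow 2) fun x => pow_ne_zero 2 (hτ₀ x y)
  differentiable_snd x :=
    (hσ.differentiable_snd x).fun_div (hτ.differentiable_snd x) fun y => hτ₀ x y

theorem laxOp_smul (ε : ℝ) (u : ℝ → ℝ → ℝ) (hr : HeatDifferentiable r)
    (hg : HeatDifferentiable g) (x y : ℝ) :
    laxOp ε u (fun a b => r a b • g a b) x y =
      laxOp ε u r x y • g x y + (2 * pX r x y) • pX g x y
        + r x y • (ε • pY g x y + pX (pX g) x y) := by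
  simp only [laxOp, pX_pX_smul hr hg, pY_smul hr.differentiable_snd hg.differentiable_snd]
  module

theorem inv_smul_laxOp_smul {ε : ℝ} {u : ℝ → ℝ → ℝ} {x y : ℝ} (hr : HeatDifferentiable r)
    (hr₀ : ∀ x y, r x y ≠ 0) (hg : HeatDifferentiable g) (hLr : laxOp ε u r x y = 0) :
    (r x y)⁻¹ • laxOp ε u (fun a b => r a b • g a b) x y =
      ε • pY g x y + pX (pX g) x y
        + (2 * pX (fun a b => Real.log (r a b)) x y) • pX g x y := by
  have drift_eq : (r x y)⁻¹ * (2 * pX r x y) = 2 * (pX r x y / r x y) := by ring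
  rw [laxOp_smul ε u hr hg, hLr, pX_log hr.differentiable_fst hr₀, zero_smul, zero_add, smul_add,
    inv_smul_smul₀ (hr₀ x y), smul_smul, drift_eq, add_comm]

theorem hirotaForm_mul (ε : ℝ) (hτ : HeatDifferentiable τ) (hτ₀ : ∀ x y, τ x y ≠ 0)
    (hr : HeatDifferentiable r) (x y : ℝ) :
    hirotaForm ε (fun a b => τ a b * r a b) τ x y =
      τ x y ^ 2 * laxOp ε (tauPotential τ) r x y := by
  have hσx := pX_smul hτ.differentiable_fst hr.differentiable_fst
  have hσxx := pX_pX_smul hτ hr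
  have hσy := pY_smul hτ.differentiable_snd hr.differentiable_snd
  simp only [smul_eq_mul] at hσx hσxx hσy
  simp only [hirotaForm, laxOp, tauPotential_eq hτ hτ₀, smul_eq_mul]
  rw [hσxx, hσx, hσy]
  field_simp [hτ₀ x y]
  ring

theorem laxOp_div_eq_zero {ε : ℝ} {x y : ℝ} (hσ : HeatDifferentiable σ)
    (hτ : HeatDifferentiable τ) (hτ₀ : ∀ x y, τ x y ≠ 0) (h : hirotaForm ε σ τ x y = 0) :
    laxOp ε (tauPotential τ) (fun a b => σ a b / τ a b) x y = 0 := by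
  have σ_eq : σ = fun a b => τ a b * (σ a b / τ a b) :=
    funext₂ fun a b => (mul_div_cancel₀ (σ a b) (hτ₀ a b)).symm
  rw [σ_eq, hirotaForm_mul ε hτ hτ₀ (hσ.div hτ hτ₀)] at h
  exact (mul_eq_zero.1 h).resolve_left (pow_ne_zero 2 (hτ₀ x y))

theorem inv_smul_laxOp_div_smul {ε : ℝ} {x y : ℝ} (hσ : HeatDifferentiable σ)
    (hτ : HeatDifferentiable τ) (hσ₀ : ∀ x y, σ x y ≠ 0) (hτ₀ : ∀ x y, τ x y ≠ 0)
    (hg : HeatDifferentiable g) (h : hirotaForm ε σ τ x y = 0) :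
    (σ x y / τ x y)⁻¹ • laxOp ε (tauPotential τ) (fun a b => (σ a b / τ a b) • g a b) x y =
      ε • pY g x y + pX (pX g) x y
        + (2 * pX (fun a b => Real.log (σ a b / τ a b)) x y) • pX g x y :=
  inv_smul_laxOp_smul (hσ.div hτ hτ₀) (fun a b => div_ne_zero (hσ₀ a b) (hτ₀ a b)) hg
    (laxOp_div_eq_zero hσ hτ hτ₀ h)

theorem pX_log_div_swap (σ τ : ℝ → ℝ → ℝ) (x y : ℝ) :
    pX (fun a b => Real.log (σ a b / τ a b)) x y =
      -pX (fun a b => Real.log (τ a b / σ a b)) x y := by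
  simp only [pX, ← deriv.fun_neg, ← Real.log_inv, inv_div]

end LaxOperator

theorem linearized_miura_as_conjugated_lax_general
    {E : Type*} [NormedAddCommGroup E] [NormedSpace ℝ E] {τ₁ τ₂ : ℝ → ℝ → ℝ} {g : ℝ → ℝ → E}
    (hτ₁ : HeatDifferentiable τ₁) (hτ₂ : HeatDifferentiable τ₂)
    (hpos₁ : ∀ x y, 0 < τ₁ x y) (hpos₂ : ∀ x y, 0 < τ₂ x y)
    (hBT : ∀ x y, hirotaForm 1 τ₁ τ₂ x y = 0) (hg : HeatDifferentiable g) :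
    (∀ x y,
      pX (pX g) x y + pY g x y
          - (2 * pX (fun a b => Real.log (τ₂ a b / τ₁ a b)) x y) • pX g x y
        = (τ₂ x y / τ₁ x y) •
            laxOp 1 (tauPotential τ₂) (fun a b => (τ₂ a b / τ₁ a b)⁻¹ • g a b) x y)
    ∧ (∀ x y,
      -pX (pX g) x y + pY g x y
          - (2 * pX (fun a b => Real.log (τ₂ a b / τ₁ a b)) x y) • pX g x y
        = -((τ₂ x y / τ₁ x y)⁻¹ •
            laxOp (-1) (tauPotential τ₁) (fun a b => (τ₂ a b / τ₁ a b) • g a b) x y)) := by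
  have hne₁ x y : τ₁ x y ≠ 0 := (hpos₁ x y).ne'
  have hne₂ x y : τ₂ x y ≠ 0 := (hpos₂ x y).ne'
  refine ⟨fun x y => ?_, fun x y => ?_⟩
  · have conj := inv_smul_laxOp_div_smul hτ₁ hτ₂ hne₁ hne₂ hg (hBT x y)
    rw [pX_log_div_swap τ₁ τ₂, inv_div] at conj
    simp only [inv_div]
    rw [conj]
    module
  · have conj := inv_smul_laxOp_div_smul hτ₂ hτ₁ hne₂ hne₁ hg
      ((hirotaForm_neg_swap 1 τ₁ τ₂ x y).trans (hBT x y))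
    rw [conj]
    module

/-- the linearized Miura (Darboux) transformations are obtained
by conjugating the Lax operators with h = τ₂/τ₁. -/
theorem linearized_miura_as_conjugated_lax
    (τ₁ τ₂ : ℝ → ℝ → ℝ)
    (hτ₁ : ContDiff ℝ (⊤ : ℕ∞) fun p : ℝ × ℝ => τ₁ p.1 p.2)
    (hτ₂ : ContDiff ℝ (⊤ : ℕ∞) fun p : ℝ × ℝ => τ₂ p.1 p.2)
    (hpos₁ : ∀ x y, 0 < τ₁ x y) (hpos₂ : ∀ x y, 0 < τ₂ x y)
    (hBT : ∀ x y,
      τ₁ x y * pX (pX τ₂) x y - 2 * pX τ₁ x y * pX τ₂ x y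
        + τ₂ x y * pX (pX τ₁) x y + τ₂ x y * pY τ₁ x y - τ₁ x y * pY τ₂ x y = 0)
    (g : ℝ → ℝ → ℂ)
    (hg : ContDiff ℝ (⊤ : ℕ∞) fun p : ℝ × ℝ => g p.1 p.2) :
    (∀ x y,
      pX (pX g) x y + pY g x y
          - 2 * ((pX (fun a b => Real.log (τ₂ a b / τ₁ a b)) x y : ℝ) : ℂ) * pX g x y
        = ((τ₂ x y / τ₁ x y : ℝ) : ℂ) *
            (pY (fun a b => ((τ₂ a b / τ₁ a b : ℝ) : ℂ)⁻¹ * g a b) x y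
              + pX (pX fun a b => ((τ₂ a b / τ₁ a b : ℝ) : ℂ)⁻¹ * g a b) x y
              + ((2 * pX (pX fun a b => Real.log (τ₂ a b)) x y : ℝ) : ℂ)
                  * (((τ₂ x y / τ₁ x y : ℝ) : ℂ)⁻¹ * g x y)))
    ∧ (∀ x y,
      -pX (pX g) x y + pY g x y
          - 2 * ((pX (fun a b => Real.log (τ₂ a b / τ₁ a b)) x y : ℝ) : ℂ) * pX g x y
        = -(((τ₂ x y / τ₁ x y : ℝ) : ℂ)⁻¹ *
            (-pY (fun a b => ((τ₂ a b / τ₁ a b : ℝ) : ℂ) * g a b) x y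
              + pX (pX fun a b => ((τ₂ a b / τ₁ a b : ℝ) : ℂ) * g a b) x y
              + ((2 * pX (pX fun a b => Real.log (τ₁ a b)) x y : ℝ) : ℂ)
                  * (((τ₂ x y / τ₁ x y : ℝ) : ℂ) * g x y)))) := by
  simpa only [laxOp, tauPotential, Complex.real_smul, one_smul, neg_one_smul, Complex.ofReal_inv,
    Complex.ofReal_mul, Complex.ofReal_ofNat] using
    linearized_miura_as_conjugated_lax_general (.of_contDiff (contDiff_infty.1 hτ₁ 2))
      (.of_contDiff (contDiff_infty.1 hτ₂ 2)) hpos₁ hpos₂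
      (fun x y => by simpa only [hirotaForm, one_mul, ← add_sub_assoc] using hBT x y)
      (.of_contDiff (contDiff_infty.1 hg 2))
end
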